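/- Let (D,V) be a Dyer system. Then the growth series 𝒢_{(D,V)}(t) is a rational function: there exist polynomials p(t), q(t) ∈ ℤ[t] with q(0) ≠ 0 such that q(t) · 𝒢_{(D,V)}(t) = p(t) in ℤ[[t]]. -/

import Mathlib

/-!
The proof follows the classical argument for Coxeter groups, with the set of inversions of an
element replaced by a cocycle.

*Reflection cocycle.* `D` acts on the group of functions `D → D` by conjugation in source and
target. Sending a generator `x` to the pair `(δ_x, x)`, where `δ_x` takes the value `x` at `x` and
is trivial elsewhere, respects the Dyer relations and so gives a homomorphism
`D → (D → D) ⋊ D`, i.e. a cocycle `N` (`DyerGraph.exists_reflCocycle`). Reading `N g r` along a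
word for `g` and deleting the letters that contribute to it yields a word for `(N g r)⁻¹ g`
(`IsReflCocycle.deletion`). Call `x` a left descent of `g` if `N g x ≠ 1`. Deletion shows that every
element is uniquely `h * a` with `h` in the parabolic subgroup `D_X` and `a` in the set `A_X` of
elements without descents in `X`, and that lengths add (`len_coset`). Hence
`𝒢(D_X) = 𝒢(D_Y) 𝒢(D_X ∩ A_Y)` for `Y ⊆ X`.

*Inclusion–exclusion.* `∑_{Y ⊆ X} (-1)^|Y| 𝒢(D_X ∩ A_Y)` is the growth series of the set `F_X` of
elements of `D_X` having all of `X` as descents (`incl_excl`). Dividing by `𝒢(D_X)`, the rationality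
of `𝒢(D_X)` follows from that of `𝒢(F_X)` and of `𝒢(D_Y)` for `Y ⊊ X` (`isRat_of_full`).

*The set `F_X`.* If all letters of `X` are involutions, `F_X` has at most one element, the longest
one (`full_unique`). If some `y ∈ X` has `f y ≠ 2` and does not commute with some `x ∈ X`, then `F_X`
is empty: a second cocycle, with values in functions on the cosets of the parabolic subgroup of the
star of `y`, shows that any element conjugating a generator to `y` lies in that subgroup, which
centralizes `y` (`DyerGraph.mem_star_of_conj`), and then two descents `x, y` of a common element
commute (`descents_commute`). In the remaining case some non-involution `y` commutes with all of
`X`, and `D_X` is the product of `⟨y⟩` and `D_{X ∖ y}` with lengths adding (`gs_central`), unless the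
two groups `D_X` and `D_{X ∖ y}` coincide; the growth series of `⟨y⟩` is a polynomial or
`(1 + t) / (1 - t)`.
-/

open scoped Classical

/-- The word length of `g` with respect to the alphabet `S ∪ S⁻¹`. -/
noncomputable def wordLength {G : Type*} [Group G] (S : Set G) (g : G) : ℕ :=
  sInf {n | ∃ w : List G, w.length = n ∧ (∀ a ∈ w, a ∈ S ∪ S⁻¹) ∧ w.prod = g}

/-- The syllable length of `g` with respect to `S`. -/
noncomputable def sylLength {G : Type*} [Group G] (S : Set G) (g : G) : ℕ :=
  sInf {n | ∃ w : List (G × ℤ), w.length = n ∧ (∀ p ∈ w, p.1 ∈ S) ∧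
    (w.map fun p => p.1 ^ p.2).prod = g}

/-- The growth series of a subset `A` of a group `G` with respect to a generating set `S`:
the coefficient of `t^n` is the number of elements of `A` of word length `n`. -/
noncomputable def growthSeries {G : Type*} [Group G] (S : Set G) (A : Set G) :
    PowerSeries ℤ :=
  PowerSeries.mk fun n => (Set.ncard {g ∈ A | wordLength S g = n} : ℤ)

/-- A Dyer graph. -/
structure DyerGraph (V : Type*) where
  Adj : V → V → Prop
  symm : ∀ {x y}, Adj x y → Adj y x
  loopless : ∀ x, ¬ Adj x x
  m : V → V → ℕ
  m_symm : ∀ x y, m x y = m y x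
  m_ge : ∀ {x y}, Adj x y → 2 ≤ m x y
  f : V → ℕ∞
  f_ge : ∀ x, 2 ≤ f x
  compat : ∀ {x y}, Adj x y → m x y ≠ 2 → f x = 2 ∧ f y = 2

namespace DyerGraph

variable {V : Type*} (Γ : DyerGraph V)

/-- The alternating word `π(x, y, n) = xyxy⋯` of length `n` in the free group. -/
def altWord (x y : V) : ℕ → FreeGroup V
  | 0 => 1
  | n + 1 => FreeGroup.of x * altWord y x n

/-- The defining relations of the Dyer group. -/
def rels : Set (FreeGroup V) :=
  {r | ∃ x : V, Γ.f x ≠ ⊤ ∧ r = FreeGroup.of x ^ (Γ.f x).toNat} ∪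
  {r | ∃ x y : V, Γ.Adj x y ∧
      r = altWord x y (Γ.m x y) * (altWord y x (Γ.m x y))⁻¹}

/-- The Dyer group associated to a Dyer graph. -/
abbrev DyerGroup := PresentedGroup Γ.rels

/-- The standard generator of the Dyer group corresponding to a vertex. -/
def gen (x : V) : Γ.DyerGroup := PresentedGroup.of x

/-- The standard parabolic subgroup generated by `X ⊆ V`. -/
def parabolic (X : Set V) : Subgroup Γ.DyerGroup := Subgroup.closure (Γ.gen '' X)

/-- The set of vertices with `f x = 2`. -/
def V2 : Set V := {x | Γ.f x = 2}

/-- The set of vertices with `2 < f x < ∞`. -/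
def Vp : Set V := {x | 2 < Γ.f x ∧ Γ.f x ≠ ⊤}

/-- The set of vertices with `f x = ∞`. -/
def Vinf : Set V := {x | Γ.f x = ⊤}

/-- A Dyer group is of spherical type if the graph is complete and `D_2` is finite. -/
def Spherical : Prop :=
  (∀ x y : V, x ≠ y → Γ.Adj x y) ∧ (Γ.parabolic Γ.V2 : Set Γ.DyerGroup).Finite

/-- The set `A_X` of `X`-minimal elements. -/
def Amin (X : Set V) : Set Γ.DyerGroup :=
  {g | ∀ h ∈ Γ.parabolic X,
    sylLength (Set.range Γ.gen) g ≤ sylLength (Set.range Γ.gen) (g * h)}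

/-- The set `B_X = A_X ∖ ⋃_{X ⊊ Y} A_Y`. -/
def Bmin (X : Set V) : Set Γ.DyerGroup :=
  Γ.Amin X \ ⋃ (Y : Set V) (_ : X ⊂ Y), Γ.Amin Y

end DyerGraph

namespace DyerGraph

/-! ### Cocycles on Dyer groups -/

section Cocycle

variable {V : Type*} (Γ : DyerGraph V)

lemma toGroup_altWord {G : Type*} [Group G] (e : V → G) (x y : V) (n : ℕ) :
    FreeGroup.lift e (altWord x y (n + 1)) = e x * FreeGroup.lift e (altWord y x n) := by
  simp [altWord]

/-- A twisted `1`-cocycle on the Dyer group with values in a (possibly noncommutative) group `M`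
may be prescribed on the generators as soon as the elements `(c x, x)` of `M ⋊ D` satisfy the
defining relations. -/
lemma exists_cocycle {M : Type*} [Group M] (φ : Γ.DyerGroup →* MulAut M) (c : V → M)
    (h1 : ∀ x, Γ.f x ≠ ⊤ →
      (⟨c x, Γ.gen x⟩ : M ⋊[φ] Γ.DyerGroup) ^ (Γ.f x).toNat = 1)
    (h2 : ∀ x y, Γ.Adj x y →
      FreeGroup.lift (fun x => (⟨c x, Γ.gen x⟩ : M ⋊[φ] Γ.DyerGroup)) (altWord x y (Γ.m x y)) =
      FreeGroup.lift (fun x => (⟨c x, Γ.gen x⟩ : M ⋊[φ] Γ.DyerGroup)) (altWord y x (Γ.m x y))) :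
    ∃ N : Γ.DyerGroup → M, (∀ x, N (Γ.gen x) = c x) ∧
      ∀ g h, N (g * h) = N g * φ g (N h) := by
  have hrel : ∀ r ∈ Γ.rels,
      FreeGroup.lift (fun x => (⟨c x, Γ.gen x⟩ : M ⋊[φ] Γ.DyerGroup)) r = 1 := by
    rintro r (⟨x, hx, rfl⟩ | ⟨x, y, hxy, rfl⟩)
    · simpa using h1 x hx
    · rw [map_mul, map_inv, h2 x y hxy, mul_inv_cancel]
  let Φ : Γ.DyerGroup →* M ⋊[φ] Γ.DyerGroup := PresentedGroup.toGroup hrel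
  have hΦ : ∀ x, Φ (Γ.gen x) = ⟨c x, Γ.gen x⟩ := fun x => PresentedGroup.toGroup.of hrel
  have hr : SemidirectProduct.rightHom.comp Φ = MonoidHom.id _ := by
    apply PresentedGroup.ext
    intro x
    exact congrArg SemidirectProduct.right (hΦ x)
  have hr' : ∀ g, (Φ g).right = g := fun g => DFunLike.congr_fun hr g
  refine ⟨fun g => (Φ g).left, fun x => by simp [hΦ], fun g h => ?_⟩
  simp only [map_mul, SemidirectProduct.mul_left, hr']

lemma gen_pow_f (x : V) (hx : Γ.f x ≠ ⊤) : Γ.gen x ^ (Γ.f x).toNat = 1 := by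
  have : PresentedGroup.mk Γ.rels (FreeGroup.of x ^ (Γ.f x).toNat) = 1 :=
    PresentedGroup.one_of_mem (Or.inl ⟨x, hx, rfl⟩)
  rwa [map_pow] at this

lemma gen_alt (x y : V) (h : Γ.Adj x y) :
    FreeGroup.lift Γ.gen (altWord x y (Γ.m x y)) = FreeGroup.lift Γ.gen (altWord y x (Γ.m x y)) := by
  have h1 : PresentedGroup.mk Γ.rels
      (altWord x y (Γ.m x y) * (altWord y x (Γ.m x y))⁻¹) = 1 :=
    PresentedGroup.one_of_mem (Or.inr ⟨x, y, h, rfl⟩)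
  have h2 : FreeGroup.lift Γ.gen = PresentedGroup.mk Γ.rels := by
    ext x
    simp [gen, PresentedGroup.of]
  rw [map_mul, map_inv, mul_inv_eq_one] at h1
  rw [h2, h1]

lemma gen_comm (x y : V) (h : Γ.Adj x y) (hm : Γ.m x y = 2) :
    Γ.gen x * Γ.gen y = Γ.gen y * Γ.gen x := by
  have := Γ.gen_alt x y h
  rw [hm] at this
  simpa [altWord] using this

lemma gen_sq (x : V) (h : Γ.f x = 2) : Γ.gen x * Γ.gen x = 1 := by
  have := Γ.gen_pow_f x (by rw [h]; decide)
  rw [h] at this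
  rw [← pow_two]
  exact this

/-- Powers of `(c, x)` in `M ⋊ D` when `x` fixes `c`. -/
lemma semi_pow {M D : Type*} [Group M] [Group D] (φ : D →* MulAut M) (c : M) (x : D)
    (h : φ x c = c) (n : ℕ) : (⟨c, x⟩ : M ⋊[φ] D) ^ n = ⟨c ^ n, x ^ n⟩ := by
  induction n with
  | zero => simp only [pow_zero]; rfl
  | succ n ih =>
    rw [pow_succ', ih, SemidirectProduct.mul_def, map_pow, h, ← pow_succ', ← pow_succ']

/-- `D` acts on the group of functions `D → D` by `(g • F)(r) = g F(g⁻¹ r g) g⁻¹`. -/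
def conjFun (D : Type*) [Group D] : D →* MulAut (D → D) where
  toFun g :=
    { toFun := fun F r => g * F (g⁻¹ * r * g) * g⁻¹
      invFun := fun F r => g⁻¹ * F (g * r * g⁻¹) * g
      left_inv := fun F => by ext r; simp [mul_assoc]
      right_inv := fun F => by ext r; simp [mul_assoc]
      map_mul' := fun F G => by ext r; simp [mul_assoc] }
  map_one' := by ext F r; simp
  map_mul' g h := by ext F r; simp [mul_assoc]

lemma conjFun_apply {D : Type*} [Group D] (g : D) (F : D → D) (r : D) :
    conjFun D g F r = g * F (g⁻¹ * r * g) * g⁻¹ := rfl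

/-- In a group with involutions `a, b`, the alternating word in `(δ_a, a)` and `(δ_b, b)` has
as first component the function `r ↦ r ^ c(r)`, where `c(r)` counts how often `r` occurs among
the reflections `(ab)^i a`, `i < n`. -/
lemma alt_left {D : Type*} [Group D] (g : V → D) (n : ℕ) : ∀ (x y : V),
    g x * g x = 1 → g y * g y = 1 → ∀ r,
    (FreeGroup.lift (fun x => (⟨fun r => if r = g x then g x else 1, g x⟩ :
      (D → D) ⋊[conjFun D] D)) (altWord x y n)).left r =
      r ^ (∑ i ∈ Finset.range n, if r = (g x * g y) ^ i * g x then 1 else 0) := by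
  induction n with
  | zero => intro x y _ _ r; simp [altWord]
  | succ n ih =>
    intro x y hx hy r
    have hx' : (g x)⁻¹ = g x := inv_eq_of_mul_eq_one_left hx
    have e : ∀ i, (g x)⁻¹ * r * g x = (g y * g x) ^ i * g y ↔
        r = (g x * g y) ^ (i + 1) * g x := by
      intro i
      have : (g x * g y) ^ (i + 1) = g x * (g y * g x) ^ i * g y := by
        rw [pow_succ', mul_assoc, mul_assoc]
        congr 1
        induction i with
        | zero => simp
        | succ i ih =>
          rw [pow_succ', pow_succ']
          simp only [mul_assoc] at *
          rw [← ih]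
      rw [this]
      constructor
      · intro h
        calc r = g x * ((g x)⁻¹ * r * g x) * (g x)⁻¹ := by group
          _ = _ := by rw [h, hx']; simp only [mul_assoc]
      · intro h
        rw [h, hx']
        simp only [mul_assoc, hx, mul_one]
        rw [← mul_assoc, hx, one_mul]
    rw [toGroup_altWord, SemidirectProduct.mul_left, Finset.sum_range_succ']
    simp only [Pi.mul_apply, conjFun_apply, ih y x hy hx]
    simp only [e, pow_zero, one_mul]
    rw [pow_add, ← (Commute.pow_pow (Commute.refl r) _ _).eq]
    congr 1
    · split_ifs with h
      · simp [h]
      · simp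
    · have : (g x)⁻¹ * r * g x = MulAut.conj (g x)⁻¹ r := by simp
      rw [this, ← map_pow]
      simp [mul_assoc]

lemma alt_right {M D : Type*} [Group M] [Group D] (φ : D →* MulAut M) (c : V → M) (g : V → D)
    (w : FreeGroup V) :
    (FreeGroup.lift (fun x => (⟨c x, g x⟩ : M ⋊[φ] D)) w).right = FreeGroup.lift g w := by
  have : SemidirectProduct.rightHom.comp (FreeGroup.lift (fun x => (⟨c x, g x⟩ : M ⋊[φ] D))) =
      FreeGroup.lift g := by
    ext x; simp
  exact DFunLike.congr_fun this w

/-- For involutions, the braid relation of length `n` gives `(xy)^n = 1`. -/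
lemma alt_pow {G : Type*} [Group G] (g : V → G) (n : ℕ) : ∀ x y,
    FreeGroup.lift g (altWord x y n) * (FreeGroup.lift g (altWord y x n))⁻¹ = 1 →
    g x * g x = 1 → g y * g y = 1 → (g x * g y) ^ n = 1 := by
  have key : ∀ n x y, g x * g x = 1 → g y * g y = 1 →
      (g x * g y) ^ n = FreeGroup.lift g (altWord x y n) *
        (FreeGroup.lift g (altWord y x n))⁻¹ := by
    intro n
    induction n with
    | zero => intros; simp [altWord]
    | succ n ih =>
      intro x y hx hy
      have hx' : (g x)⁻¹ = g x := inv_eq_of_mul_eq_one_left hx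
      have hy' : (g y)⁻¹ = g y := inv_eq_of_mul_eq_one_left hy
      rw [toGroup_altWord, toGroup_altWord, mul_inv_rev, hy', ← mul_assoc,
        mul_assoc (g x) _ _, ← ih y x hy hx]
      clear ih
      induction n with
      | zero => simp
      | succ n ih =>
        rw [pow_succ', ih, pow_succ' _ n]
        simp only [mul_assoc]
  intro x y h hx hy
  rw [key n x y hx hy, h]

/-- The reflection cocycle `N : D → (D → D)`, determined by `N(x) = δ_x`: it takes the value `x`
at `x` and is trivial elsewhere. -/
theorem exists_reflCocycle : ∃ N : Γ.DyerGroup → Γ.DyerGroup → Γ.DyerGroup,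
    (∀ x r, N (Γ.gen x) r = if r = Γ.gen x then Γ.gen x else 1) ∧
    ∀ g h r, N (g * h) r = N g r * (g * N h (g⁻¹ * r * g) * g⁻¹) := by
  suffices H : ∃ N : Γ.DyerGroup → Γ.DyerGroup → Γ.DyerGroup,
      (∀ x, N (Γ.gen x) = fun r => if r = Γ.gen x then Γ.gen x else 1) ∧
      ∀ g h, N (g * h) = N g * conjFun Γ.DyerGroup g (N h) by
    obtain ⟨N, h1, h2⟩ := H
    exact ⟨N, fun x r => by rw [h1], fun g h r => by rw [h2]; rfl⟩
  apply Γ.exists_cocycle (conjFun Γ.DyerGroup)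
    (fun x r => if r = Γ.gen x then Γ.gen x else 1)
  · intro x hx
    rw [semi_pow]
    · ext r
      · by_cases h : r = Γ.gen x
        · simp [h, Γ.gen_pow_f x hx]
        · simp [h]
      · simp [Γ.gen_pow_f x hx]
    · ext r
      rw [conjFun_apply]
      by_cases h : r = Γ.gen x
      · simp [h]
      · have : (Γ.gen x)⁻¹ * r * Γ.gen x ≠ Γ.gen x := by
          intro h'
          apply h
          have := congrArg (fun z => Γ.gen x * z * (Γ.gen x)⁻¹) h'
          simpa [mul_assoc] using this
        simp [h, this]
  · intro x y hxy
    ext r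
    · by_cases hm : Γ.m x y = 2
      · have hc := Γ.gen_comm x y hxy hm
        have e1 : (Γ.gen x)⁻¹ * r * Γ.gen x = Γ.gen y ↔ r = Γ.gen y := by
          rw [mul_assoc, inv_mul_eq_iff_eq_mul, hc, mul_left_inj]
        have e2 : (Γ.gen y)⁻¹ * r * Γ.gen y = Γ.gen x ↔ r = Γ.gen x := by
          rw [mul_assoc, inv_mul_eq_iff_eq_mul, ← hc, mul_left_inj]
        have e3 : Γ.gen y * Γ.gen x * (Γ.gen y)⁻¹ = Γ.gen x := by rw [← hc]; simp
        rw [hm]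
        simp only [altWord, mul_one, map_mul, FreeGroup.lift_apply_of,
          SemidirectProduct.mul_left, Pi.mul_apply, conjFun_apply, e1, e2]
        split_ifs <;> simp [e3, hc]
      · obtain ⟨fx, fy⟩ := Γ.compat hxy hm
        have hx := Γ.gen_sq x fx
        have hy := Γ.gen_sq y fy
        have hp := alt_pow Γ.gen (Γ.m x y) x y
          (by rw [Γ.gen_alt x y hxy, mul_inv_cancel]) hx hy
        rw [alt_left _ _ _ _ hx hy, alt_left _ _ _ _ hy hx,
          ← Finset.sum_range_reflect]
        congr 1
        refine Finset.sum_congr rfl fun i hi => ?_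
        have hi := Finset.mem_range.1 hi
        have hyx : Γ.gen y * Γ.gen x = (Γ.gen x * Γ.gen y)⁻¹ := by
          rw [mul_inv_rev, inv_eq_of_mul_eq_one_left hx, inv_eq_of_mul_eq_one_left hy]
        -- `(xy)^(m-1-i) x = (yx)^i y` because `(xy)^m = 1`
        have : (Γ.gen x * Γ.gen y) ^ (Γ.m x y - 1 - i) * Γ.gen x =
            (Γ.gen y * Γ.gen x) ^ i * Γ.gen y := by
          rw [hyx, inv_pow, eq_inv_mul_iff_mul_eq, ← mul_assoc, ← pow_add]
          apply mul_right_cancel (b := Γ.gen y)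
          rw [mul_assoc, ← pow_succ, hy]
          rw [show i + (Γ.m x y - 1 - i) + 1 = Γ.m x y by omega, hp]
        rw [this]
    · rw [alt_right, alt_right, Γ.gen_alt x y hxy]

/-- If `f y ≠ 2`, any element conjugating a generator to `y` lies in the parabolic subgroup of
the star of `y`. The proof evaluates, at the trivial coset, the cocycle with values in functions
`D ⧸ K → ℤ/f(y)` that sends `y` to the indicator of the trivial coset and kills all other
generators. -/
theorem mem_star_of_conj (y : V) (hy : Γ.f y ≠ 2) (p : Γ.DyerGroup) (s : V)
    (h : p * Γ.gen s * p⁻¹ = Γ.gen y) : p ∈ Γ.parabolic (insert y {u | Γ.Adj y u}) := by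
  set K := Γ.parabolic (insert y {u | Γ.Adj y u}) with hK
  have hyK : Γ.gen y ∈ K := Subgroup.subset_closure ⟨y, by simp, rfl⟩
  let A := Multiplicative (ZMod (Γ.f y).toNat)
  let φ : Γ.DyerGroup →* MulAut (Γ.DyerGroup ⧸ K → A) :=
    { toFun := fun g =>
        { toFun := fun F ω => F (g⁻¹ • ω)
          invFun := fun F ω => F (g • ω)
          left_inv := fun F => by ext; simp
          right_inv := fun F => by ext; simp
          map_mul' := fun F G => rfl }
      map_one' := by ext F ω; simp
      map_mul' := fun g h => by ext F ω; simp [mul_smul] }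
  have φa : ∀ g F ω, φ g F ω = F (g⁻¹ • ω) := fun _ _ _ => rfl
  let o : Γ.DyerGroup ⧸ K := ((1 : Γ.DyerGroup) : Γ.DyerGroup ⧸ K)
  have ho : ∀ g ∈ K, ∀ ω, g⁻¹ • ω = o ↔ ω = o := by
    intro g hg ω
    rw [inv_smul_eq_iff]
    have : g • o = o := by
      change ((g * 1 : Γ.DyerGroup) : Γ.DyerGroup ⧸ K) = _
      rw [QuotientGroup.eq]
      simpa using hg
    rw [this]
  let δ : Γ.DyerGroup ⧸ K → A := fun ω => if ω = o then Multiplicative.ofAdd 1 else 1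
  have hδ : ∀ g ∈ K, φ g δ = δ := by
    intro g hg
    ext ω
    rw [φa]
    simp only [δ, ho g hg]
  suffices H : ∃ N : Γ.DyerGroup → Γ.DyerGroup ⧸ K → A,
      (∀ x, N (Γ.gen x) = if x = y then δ else 1) ∧ ∀ g h, N (g * h) = N g * φ g (N h) by
    obtain ⟨N, h1, h2⟩ := H
    have e : p * Γ.gen s = Γ.gen y * p := by rw [← h]; group
    have := congrArg (fun g => N g o) e
    simp only [h2, h1, if_true, Pi.mul_apply, φa] at this
    rw [(ho _ hyK o).2 rfl, mul_comm] at this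
    have := mul_right_cancel this
    by_contra hp
    have hne : (1 : A) ≠ δ o := by
      simp only [δ, if_true]
      have : Fact (1 ≠ (Γ.f y).toNat) := ⟨by
        intro h
        have h2 := Γ.f_ge y
        generalize Γ.f y = n at h h2
        cases n with
        | top => simp at h
        | coe n =>
          simp at h h2
          subst h
          exact absurd h2 (by decide)⟩
      intro h
      have : (0 : ZMod (Γ.f y).toNat) = 1 := congrArg Multiplicative.toAdd h
      have : Nontrivial (ZMod (Γ.f y).toNat) := ZMod.nontrivial_iff.2 (Ne.symm Fact.out)
      exact zero_ne_one ‹(0 : ZMod (Γ.f y).toNat) = 1›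
    apply hne
    rw [← this]
    split_ifs
    · have : p⁻¹ • o ≠ o := by
        intro h
        apply hp
        change ((p⁻¹ * 1 : Γ.DyerGroup) : Γ.DyerGroup ⧸ K) = _ at h
        rw [QuotientGroup.eq] at h
        simpa using h
      simp [δ, this]
    · rfl
  apply Γ.exists_cocycle φ (fun x => if x = y then δ else 1)
  · intro x hx
    rw [semi_pow]
    · ext ω
      · by_cases hxy : x = y
        · subst hxy
          simp only [if_true, Pi.pow_apply, SemidirectProduct.one_left, Pi.one_apply, δ]
          split_ifs
          · rw [← ofAdd_nsmul]; simp
          · simp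
        · simp [hxy]
      · simp [Γ.gen_pow_f x hx]
    · split_ifs with hxy
      · subst hxy; exact hδ _ hyK
      · simp
  · have comm : ∀ v, Γ.Adj y v →
        (⟨δ, Γ.gen y⟩ : (Γ.DyerGroup ⧸ K → A) ⋊[φ] Γ.DyerGroup) * ⟨1, Γ.gen v⟩ =
        ⟨1, Γ.gen v⟩ * ⟨δ, Γ.gen y⟩ := by
      intro v hv
      have hm : Γ.m y v = 2 := by
        by_contra hm
        exact hy (Γ.compat hv hm).1
      ext ω
      · simp [hδ (Γ.gen v) (Subgroup.subset_closure ⟨v, Or.inr hv, rfl⟩)]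
      · simp [Γ.gen_comm y v hv hm]
    intro u v huv
    have hne : u ≠ v := by rintro rfl; exact Γ.loopless _ huv
    by_cases huy : u = y
    · subst huy
      have hm : Γ.m u v = 2 := by
        by_contra hm
        exact hy (Γ.compat huv hm).1
      rw [hm]
      simpa [altWord, hne.symm] using comm v huv
    · by_cases hvy : v = y
      · subst hvy
        have hm : Γ.m u v = 2 := by
          by_contra hm
          exact hy (Γ.compat huv hm).2
        rw [hm]
        simpa [altWord, hne] using (comm u (Γ.symm huv)).symm
      · -- both letters have trivial first component, so the relation holds inside `D`
        have key : ∀ n a b, a ≠ y → b ≠ y →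
            FreeGroup.lift (fun x => (⟨if x = y then δ else 1, Γ.gen x⟩ :
              (Γ.DyerGroup ⧸ K → A) ⋊[φ] Γ.DyerGroup)) (altWord a b n) =
            SemidirectProduct.inr (FreeGroup.lift Γ.gen (altWord a b n)) := by
          intro n
          induction n with
          | zero => intros; simp [altWord]
          | succ n ih =>
            intro a b ha hb
            rw [toGroup_altWord, toGroup_altWord, ih b a hb ha, map_mul]
            simp only [if_neg ha]
            rfl
        rw [key _ _ _ huy hvy, key _ _ _ hvy huy, Γ.gen_alt u v huv]

end Cocycle

end DyerGraph

namespace DyerGrowth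

/-! ### Words and lengths -/

section Words

variable {V D : Type*} [Group D]

/-- `Word gen X n g`: the element `g` is a product of `n` letters `x` or `x⁻¹` with `x ∈ X`. -/
inductive Word (gen : V → D) (X : Set V) : ℕ → D → Prop
  | one : Word gen X 0 1
  | pos {n g} (x : V) : x ∈ X → Word gen X n g → Word gen X (n + 1) (gen x * g)
  | neg {n g} (x : V) : x ∈ X → Word gen X n g → Word gen X (n + 1) ((gen x)⁻¹ * g)

variable {gen : V → D} {X Y : Set V} {m n : ℕ} {g h : D}

lemma Word.mono (hXY : X ⊆ Y) (w : Word gen X n g) : Word gen Y n g := by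
  induction w with
  | one => exact .one
  | pos x hx _ ih => exact .pos x (hXY hx) ih
  | neg x hx _ ih => exact .neg x (hXY hx) ih

lemma Word.mul (w : Word gen X m g) (w' : Word gen X n h) : Word gen X (m + n) (g * h) := by
  induction w with
  | one => simpa using w'
  | pos x hx _ ih => rw [mul_assoc, Nat.add_right_comm]; exact .pos x hx ih
  | neg x hx _ ih => rw [mul_assoc, Nat.add_right_comm]; exact .neg x hx ih

lemma Word.single {x : V} (hx : x ∈ X) : Word gen X 1 (gen x) := by
  simpa using Word.pos (gen := gen) x hx .one

lemma Word.single_inv {x : V} (hx : x ∈ X) : Word gen X 1 (gen x)⁻¹ := by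
  simpa using Word.neg (gen := gen) x hx .one

lemma Word.inv (w : Word gen X n g) : Word gen X n g⁻¹ := by
  induction w with
  | one => simpa using Word.one
  | pos x hx _ ih => rw [mul_inv_rev]; exact ih.mul (.single_inv hx)
  | neg x hx _ ih => rw [mul_inv_rev, inv_inv]; exact ih.mul (.single hx)

lemma Word.pow {x : V} (hx : x ∈ X) (n : ℕ) : Word gen X n (gen x ^ n) := by
  induction n with
  | zero => simpa using Word.one
  | succ n ih => rw [pow_succ]; exact ih.mul (.single hx)

lemma Word.zpow {x : V} (hx : x ∈ X) (k : ℤ) : Word gen X k.natAbs (gen x ^ k) := by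
  obtain ⟨n, rfl | rfl⟩ := k.eq_nat_or_neg
  · simpa using Word.pow hx n
  · simpa using (Word.pow hx n).inv

/-- The subgroup generated by the letters of `X`. -/
abbrev par (gen : V → D) (X : Set V) : Subgroup D := Subgroup.closure (gen '' X)

lemma gen_mem_par {x : V} (hx : x ∈ X) : gen x ∈ par gen X :=
  Subgroup.subset_closure ⟨x, hx, rfl⟩

lemma Word.mem_par (w : Word gen X n g) : g ∈ par gen X := by
  induction w with
  | one => exact one_mem _
  | pos x hx _ ih => exact mul_mem (gen_mem_par hx) ih
  | neg x hx _ ih => exact mul_mem (inv_mem (gen_mem_par hx)) ih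

lemma exists_word (hg : g ∈ par gen X) : ∃ n, Word gen X n g := by
  induction hg using Subgroup.closure_induction with
  | mem _ h => obtain ⟨x, hx, rfl⟩ := h; exact ⟨1, .single hx⟩
  | one => exact ⟨0, .one⟩
  | mul _ _ _ _ h1 h2 =>
    obtain ⟨a, ha⟩ := h1
    obtain ⟨b, hb⟩ := h2
    exact ⟨_, ha.mul hb⟩
  | inv _ _ h => obtain ⟨a, ha⟩ := h; exact ⟨a, ha.inv⟩

lemma word_univ_iff : Word gen Set.univ n g ↔ ∃ w : List D, w.length = n ∧
    (∀ a ∈ w, a ∈ Set.range gen ∪ (Set.range gen)⁻¹) ∧ w.prod = g := by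
  constructor
  · intro w
    induction w with
    | one => exact ⟨[], rfl, by simp, rfl⟩
    | pos x _ _ ih =>
      obtain ⟨w, h1, h2, h3⟩ := ih
      refine ⟨gen x :: w, by simp [h1], ?_, by simp [h3]⟩
      intro a ha
      rcases List.mem_cons.1 ha with rfl | ha
      · exact Or.inl ⟨x, rfl⟩
      · exact h2 a ha
    | neg x _ _ ih =>
      obtain ⟨w, h1, h2, h3⟩ := ih
      refine ⟨(gen x)⁻¹ :: w, by simp [h1], ?_, by simp [h3]⟩
      intro a ha
      rcases List.mem_cons.1 ha with rfl | ha
      · exact Or.inr (by simp)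
      · exact h2 a ha
  · rintro ⟨w, rfl, h, rfl⟩
    induction w with
    | nil => exact .one
    | cons a w ih =>
      rw [List.prod_cons, List.length_cons]
      have ih := ih fun b hb => h b (List.mem_cons_of_mem _ hb)
      rcases h a List.mem_cons_self with ⟨x, rfl⟩ | ⟨x, hx⟩
      · exact .pos x trivial ih
      · rw [← inv_inv a, ← hx]
        exact .neg x trivial ih

/-- The word length with respect to the generators `gen x`. -/
noncomputable abbrev len (gen : V → D) (g : D) : ℕ := wordLength (Set.range gen) g

lemma len_eq (gen : V → D) (g : D) : len gen g = sInf {n | Word gen Set.univ n g} := by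
  simp only [word_univ_iff]
  rfl

lemma len_le (w : Word gen X n g) : len gen g ≤ n := by
  rw [len_eq]
  exact Nat.sInf_le (w.mono (Set.subset_univ X))

lemma word_len (hgen : par gen Set.univ = ⊤) (g : D) : Word gen Set.univ (len gen g) g := by
  rw [len_eq]
  exact Nat.sInf_mem (s := {n | Word gen Set.univ n g}) (exists_word (hgen ▸ Subgroup.mem_top g))

lemma len_one : len gen 1 = 0 := Nat.le_zero.1 (len_le (X := ∅) .one)

lemma len_mul_le (hgen : par gen Set.univ = ⊤) (g h : D) :
    len gen (g * h) ≤ len gen g + len gen h :=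
  len_le ((word_len hgen g).mul (word_len hgen h))

lemma eq_one_of_len (hgen : par gen Set.univ = ⊤) (h : len gen g = 0) : g = 1 := by
  have := word_len hgen g
  rw [h] at this
  cases this
  rfl

lemma finite_word [Finite V] (gen : V → D) (n : ℕ) : {g | Word gen Set.univ n g}.Finite := by
  induction n with
  | zero =>
    refine (Set.finite_singleton (1 : D)).subset ?_
    intro g hg
    cases hg
    rfl
  | succ n ih =>
    refine ((Set.finite_range gen |>.mul ih).union
      ((Set.finite_range fun x => (gen x)⁻¹).mul ih)).subset ?_
    intro g hg
    cases hg with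
    | pos x _ w => exact Or.inl (Set.mul_mem_mul ⟨x, rfl⟩ w)
    | neg x _ w => exact Or.inr (Set.mul_mem_mul ⟨x, rfl⟩ w)

lemma finite_len [Finite V] (hgen : par gen Set.univ = ⊤) (n : ℕ) : {g | len gen g = n}.Finite :=
  (finite_word gen n).subset fun g hg => by
    have := word_len hgen g
    rwa [show len gen g = n from hg] at this

end Words

/-! ### Descents and coset representatives from a reflection cocycle -/

section Reflections

variable {V D : Type*} [Group D]

/-- A reflection cocycle on a group `D` with letters `gen x`: a twisted cocycle with values in
the functions `D → D`, whose value on `gen x` is `gen x` at the point `gen x` and trivial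
elsewhere. -/
structure IsReflCocycle (gen : V → D) (N : D → D → D) : Prop where
  gen : ∀ x r, N (gen x) r = if r = gen x then gen x else 1
  mul : ∀ g h r, N (g * h) r = N g r * (g * N h (g⁻¹ * r * g) * g⁻¹)

variable {gen : V → D} {N : D → D → D} {X Y : Set V} {m n : ℕ} {g h : D}

namespace IsReflCocycle

lemma one (H : IsReflCocycle gen N) (r : D) : N 1 r = 1 := by
  simpa using H.mul 1 1 r

lemma inv (H : IsReflCocycle gen N) (x : V) (r : D) :
    N (gen x)⁻¹ r = if r = gen x then (gen x)⁻¹ else 1 := by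
  have h := H.mul (gen x)⁻¹ (gen x) r
  rw [inv_mul_cancel, H.one, H.gen] at h
  have e : ((gen x)⁻¹⁻¹ * r * (gen x)⁻¹ = gen x) ↔ r = gen x := by
    rw [inv_inv, mul_inv_eq_iff_eq_mul, mul_right_inj]
  rw [eq_comm, mul_eq_one_iff_eq_inv] at h
  rw [h]
  simp only [e]
  split_ifs <;> simp

lemma zpow (H : IsReflCocycle gen N) (x : V) (k : ℤ) (r : D) :
    N (gen x ^ k) r = if r = gen x then gen x ^ k else 1 := by
  have e : ∀ j : ℤ, (gen x ^ j)⁻¹ * r * gen x ^ j = gen x ↔ r = gen x := by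
    intro j
    rw [mul_assoc, inv_mul_eq_iff_eq_mul, (Commute.refl (gen x)).zpow_left j |>.eq, mul_left_inj]
  induction k with
  | zero => simp [H.one]
  | succ i ih =>
    rw [zpow_add, zpow_one, H.mul, ih, H.gen]
    simp only [e]
    split_ifs <;> group
  | pred i ih =>
    rw [zpow_sub, zpow_one, H.mul, ih, H.inv]
    simp only [e]
    split_ifs <;> group

/-- Deletion: from a word for `g`, deleting the letters whose associated reflection is `r` gives a
word for `(N g r)⁻¹ g`, and `N g r` is a power `r ^ k` with `|k|` at most the number of deleted
letters. -/
lemma deletion (H : IsReflCocycle gen N) (w : Word gen X n g) : ∀ r, ∃ (k : ℤ) (n' : ℕ),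
    N g r = r ^ k ∧ n' + k.natAbs ≤ n ∧ Word gen X n' (r ^ (-k) * g) := by
  induction w with
  | one => exact fun r => ⟨0, 0, by simp [H.one], by simp, by simpa using Word.one⟩
  | @pos n g x hx w ih =>
    intro r
    obtain ⟨k, n', h1, h2, h3⟩ := ih ((gen x)⁻¹ * r * gen x)
    have ec : ∀ j : ℤ, ((gen x)⁻¹ * r * gen x) ^ j = (gen x)⁻¹ * r ^ j * gen x := by
      intro j
      have := map_zpow (MulAut.conj (gen x)⁻¹) r j
      simpa using this.symm
    rw [ec] at h1 h3
    have e : N (gen x * g) r = N (gen x) r * r ^ k := by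
      rw [H.mul, h1]; congr 1; group
    rw [H.gen] at e
    by_cases hr : r = gen x
    · subst hr
      refine ⟨1 + k, n', by rw [e, if_pos rfl, zpow_add, zpow_one], by omega, ?_⟩
      convert h3 using 1
      group
    · refine ⟨k, n' + 1, by rw [e, if_neg hr, one_mul], by omega, ?_⟩
      convert Word.pos x hx h3 using 1
      group
  | @neg n g x hx w ih =>
    intro r
    obtain ⟨k, n', h1, h2, h3⟩ := ih (gen x * r * (gen x)⁻¹)
    have ec : ∀ j : ℤ, (gen x * r * (gen x)⁻¹) ^ j = gen x * r ^ j * (gen x)⁻¹ := by simp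
    rw [ec] at h1 h3
    have e : N ((gen x)⁻¹ * g) r = N (gen x)⁻¹ r * r ^ k := by
      rw [H.mul, inv_inv, h1]; congr 1; group
    rw [H.inv] at e
    by_cases hr : r = gen x
    · subst hr
      refine ⟨-1 + k, n', by rw [e, if_pos rfl, zpow_add, zpow_neg_one], by omega, ?_⟩
      convert h3 using 1
      group
    · refine ⟨k, n' + 1, by rw [e, if_neg hr, one_mul], by omega, ?_⟩
      convert Word.neg x hx h3 using 1
      group

lemma deletion_len (H : IsReflCocycle gen N) (hgen : par gen Set.univ = ⊤) (g r : D) :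
    ∃ k : ℤ, N g r = r ^ k ∧ len gen (r ^ (-k) * g) + k.natAbs ≤ len gen g := by
  obtain ⟨k, n', h1, h2, h3⟩ := H.deletion (word_len hgen g) r
  exact ⟨k, h1, by have := len_le h3; omega⟩

/-- A nontrivial element of a parabolic subgroup has a left descent there. -/
lemma exists_descent (H : IsReflCocycle gen N) (hg : g ∈ par gen X) (h1 : g ≠ 1) :
    ∃ x ∈ X, N g (gen x) ≠ 1 := by
  classical
  have hw := exists_word hg
  have hmin := fun n (hn : Word gen X n g) => Nat.find_min' hw hn
  have hfind := Nat.find_spec hw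
  generalize Nat.find hw = n at hmin hfind
  cases hfind with
  | one => exact absurd rfl h1
  | @pos n g' x hx w =>
    refine ⟨x, hx, fun hN => ?_⟩
    obtain ⟨k, n', e1, e2, e3⟩ := H.deletion w (gen x)
    have hk : gen x ^ (-k) = gen x := by
      rw [H.mul, H.gen, if_pos rfl, inv_mul_cancel, one_mul, e1] at hN
      rw [zpow_neg, inv_eq_iff_eq_inv, eq_comm, inv_eq_iff_mul_eq_one]
      calc gen x * gen x ^ k = gen x * (gen x * gen x ^ k * (gen x)⁻¹) := by group
        _ = 1 := hN
    rw [hk] at e3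
    have := hmin _ e3
    omega
  | @neg n g' x hx w =>
    refine ⟨x, hx, fun hN => ?_⟩
    obtain ⟨k, n', e1, e2, e3⟩ := H.deletion w (gen x)
    have hk : gen x ^ (-k) = (gen x)⁻¹ := by
      rw [H.mul, H.inv, if_pos rfl, inv_inv, mul_inv_cancel_right, e1] at hN
      rw [zpow_neg, inv_inj, eq_comm, ← inv_mul_eq_one]
      calc (gen x)⁻¹ * gen x ^ k = (gen x)⁻¹ * ((gen x)⁻¹ * gen x ^ k * gen x) := by group
        _ = 1 := hN
    rw [hk] at e3
    have := hmin _ e3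
    omega

lemma conj_mem {K : Subgroup D} {g r : D} (hg : g ∈ K) : g⁻¹ * r * g ∈ K ↔ r ∈ K := by
  rw [Subgroup.mul_mem_cancel_right _ hg, Subgroup.mul_mem_cancel_left _ (inv_mem hg)]

/-- The cocycle of an element of a parabolic subgroup is supported there. -/
lemma mem_of_ne_one (H : IsReflCocycle gen N) (hg : g ∈ par gen X) :
    ∀ r, N g r ≠ 1 → r ∈ par gen X := by
  obtain ⟨n, w⟩ := exists_word hg
  clear hg
  induction w with
  | one => intro r h; exact absurd (H.one r) h
  | @pos n g x hx w ih =>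
    intro r h
    by_contra hr
    apply h
    rw [H.mul, H.gen, if_neg (by rintro rfl; exact hr (gen_mem_par hx))]
    have : N g ((gen x)⁻¹ * r * gen x) = 1 := by
      by_contra h'
      exact hr ((conj_mem (gen_mem_par hx)).1 (ih _ h'))
    rw [this]; group
  | @neg n g x hx w ih =>
    intro r h
    by_contra hr
    apply h
    rw [H.mul, H.inv, if_neg (by rintro rfl; exact hr (gen_mem_par hx))]
    have : N g ((gen x)⁻¹⁻¹ * r * (gen x)⁻¹) = 1 := by
      by_contra h'
      exact hr ((conj_mem (inv_mem (gen_mem_par hx))).1 (ih _ h'))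
    rw [this]; group

/-- The elements `a` without left descents in `X`, a letter `x` being a left descent of `a` when
`N a x ≠ 1`. By `minSet_iff` and `len_coset` these are the shortest elements of their right
cosets modulo the parabolic subgroup on `X`. -/
def minSet (gen : V → D) (N : D → D → D) (X : Set V) : Set D := {a | ∀ x ∈ X, N a (gen x) = 1}

/-- A shortest element `a` of a right coset has `N a r = 1` for all `r` in the subgroup, by
deletion. -/
lemma exists_coset_rep (H : IsReflCocycle gen N) (hgen : par gen Set.univ = ⊤) (X : Set V)
    (g : D) : ∃ h ∈ par gen X, ∃ a, g = h * a ∧ ∀ r ∈ par gen X, N a r = 1 := by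
  classical
  have hex : ∃ n, ∃ h ∈ par gen X, len gen (h * g) = n := ⟨_, 1, one_mem _, rfl⟩
  obtain ⟨h, hh, hl⟩ := Nat.find_spec hex
  refine ⟨h⁻¹, inv_mem hh, h * g, by group, fun r hr => ?_⟩
  obtain ⟨k, h1, h2⟩ := H.deletion_len hgen (h * g) r
  have := Nat.find_min' hex ⟨r ^ (-k) * h, mul_mem (zpow_mem hr _) hh, rfl⟩
  rw [mul_assoc] at this
  have : k = 0 := by omega
  simpa [this] using h1

lemma eval_coset (H : IsReflCocycle gen N) {a r : D} (hh : h ∈ par gen X)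
    (ha : ∀ r ∈ par gen X, N a r = 1) (hr : r ∈ par gen X) : N (h * a) r = N h r := by
  rw [H.mul, ha _ ((conj_mem hh).2 hr)]
  simp

lemma minSet_iff (H : IsReflCocycle gen N) (hgen : par gen Set.univ = ⊤) {a : D} :
    a ∈ minSet gen N X ↔ ∀ r ∈ par gen X, N a r = 1 := by
  refine ⟨fun ha => ?_, fun ha x hx => ha _ (gen_mem_par hx)⟩
  obtain ⟨h, hh, a', rfl, ha'⟩ := H.exists_coset_rep hgen X a
  have : h = 1 := by
    by_contra h1
    obtain ⟨x, hx, hN⟩ := H.exists_descent hh h1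
    apply hN
    rw [← H.eval_coset hh ha' (gen_mem_par hx)]
    exact ha x hx
  simpa [this] using ha'

lemma coset_unique (H : IsReflCocycle gen N) {h h' a a' : D} (hh : h ∈ par gen X)
    (hh' : h' ∈ par gen X) (ha : ∀ r ∈ par gen X, N a r = 1) (ha' : ∀ r ∈ par gen X, N a' r = 1)
    (e : h * a = h' * a') : h = h' := by
  have hk : h'⁻¹ * h ∈ par gen X := mul_mem (inv_mem hh') hh
  have ek : a' = h'⁻¹ * h * a := by rw [mul_assoc, e]; group
  by_contra hne
  obtain ⟨x, hx, hN⟩ := H.exists_descent hk (fun h1 => hne (inv_mul_eq_one.1 h1).symm)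
  apply hN
  rw [← H.eval_coset hk ha (gen_mem_par hx), ← ek]
  exact ha' _ (gen_mem_par hx)

/-- Lengths add along the decomposition of `D` into a parabolic subgroup and the minimal
representatives of its right cosets. -/
lemma len_coset (H : IsReflCocycle gen N) (hgen : par gen Set.univ = ⊤) {a : D}
    (ha : ∀ r ∈ par gen X, N a r = 1) (hh : h ∈ par gen X) :
    len gen (h * a) = len gen h + len gen a := by
  refine le_antisymm (len_mul_le hgen _ _) ?_
  induction hl : len gen h using Nat.strong_induction_on generalizing h with
  | _ n ih =>
  subst hl
  by_cases h1 : h = 1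
  · subst h1; simp [len_one]
  obtain ⟨x, hx, hN⟩ := H.exists_descent hh h1
  obtain ⟨k, e1, e2⟩ := H.deletion_len hgen (h * a) (gen x)
  obtain ⟨k', e1', e2'⟩ := H.deletion_len hgen h (gen x)
  rw [H.eval_coset hh ha (gen_mem_par hx)] at e1
  have hk' : k' ≠ 0 := by rintro rfl; exact hN (by simpa using e1')
  have ek : gen x ^ (-k') = gen x ^ (-k) := by rw [zpow_neg, zpow_neg, ← e1, ← e1']
  rw [ek] at e2'
  have := ih _ (by omega) (mul_mem (zpow_mem (gen_mem_par hx) (-k)) hh) rfl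
  rw [mul_assoc] at this
  have l1 : len gen h ≤ k.natAbs + len gen (gen x ^ (-k) * h) := by
    have e : h = gen x ^ k * (gen x ^ (-k) * h) := by group
    have := len_mul_le hgen (gen x ^ k) (gen x ^ (-k) * h)
    rw [← e] at this
    have := len_le (Word.zpow (gen := gen) (X := Set.univ) (Set.mem_univ x) k)
    omega
  omega

/-- The elements of the parabolic subgroup on `X` having every letter of `X` as a left descent,
a letter `x` being a left descent of `g` when `N g x ≠ 1`. -/
def fullSet (gen : V → D) (N : D → D → D) (X : Set V) : Set D :=
  {g | g ∈ par gen X ∧ ∀ x ∈ X, N g (gen x) ≠ 1}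

lemma zpow_eq_of_sq {r : D} (hr : r * r = 1) (k : ℤ) (hk : r ^ k ≠ 1) : r ^ (-k) = r := by
  rcases Int.even_or_odd' k with ⟨j, rfl | rfl⟩
  · exfalso; apply hk; rw [zpow_mul, zpow_two, hr, one_zpow]
  · rw [zpow_neg, zpow_add, zpow_mul]
    simp only [zpow_two, hr, one_zpow, zpow_one, one_mul]
    exact inv_eq_of_mul_eq_one_left hr

/-- If all letters of `X` are involutions, every element of the parabolic subgroup is a prefix of
any element having full descent set, as for the longest element of a finite Coxeter group. -/
lemma prefix_full (H : IsReflCocycle gen N) (hgen : par gen Set.univ = ⊤)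
    (hX : ∀ x ∈ X, gen x * gen x = 1) (hg : g ∈ fullSet gen N X) {u : D} (hu : u ∈ par gen X) :
    len gen g = len gen u + len gen (u⁻¹ * g) := by
  induction hl : len gen u using Nat.strong_induction_on generalizing u with
  | _ n ih =>
  subst hl
  by_cases h1 : u = 1
  · subst h1; simp [len_one]
  obtain ⟨x, hx, hN⟩ := H.exists_descent hu h1
  have hx2 := hX x hx
  have hxi : (gen x)⁻¹ = gen x := inv_eq_of_mul_eq_one_left hx2
  obtain ⟨k, e1, e2⟩ := H.deletion_len hgen u (gen x)
  have hk0 : k ≠ 0 := by rintro rfl; exact hN (by simpa using e1)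
  have hk := zpow_eq_of_sq hx2 k (e1 ▸ hN)
  rw [hk] at e2
  have hxk : gen x ^ k = gen x := by rw [← inv_inv (gen x ^ k), ← zpow_neg, hk, hxi]
  have hu' : gen x * u ∈ par gen X := mul_mem (gen_mem_par hx) hu
  have IH := ih _ (by omega) hu' rfl
  have hNu' : N (gen x * u) (gen x) = 1 := by
    rw [H.mul, H.gen, if_pos rfl, inv_mul_cancel, one_mul, e1, hxk]
    simp [hx2]
  have eg : g = gen x * u * ((gen x * u)⁻¹ * g) := by group
  have hNg := hg.2 x hx
  rw [eg, H.mul, hNu', one_mul] at hNg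
  set v := (gen x * u)⁻¹ * g with hv
  set r := (gen x * u)⁻¹ * gen x * (gen x * u) with hr
  have hNv : N v r ≠ 1 := fun h => hNg (by rw [h]; group)
  have hr2 : r * r = 1 := by
    calc r * r = (gen x * u)⁻¹ * (gen x * gen x) * (gen x * u) := by rw [hr]; group
      _ = 1 := by rw [hx2]; group
  obtain ⟨j, f1, f2⟩ := H.deletion_len hgen v r
  have hj0 : j ≠ 0 := by rintro rfl; exact hNv (by simpa using f1)
  rw [zpow_eq_of_sq hr2 j (f1 ▸ hNv)] at f2
  have erv : r * v = u⁻¹ * g := by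
    calc r * v = u⁻¹ * (gen x)⁻¹ * gen x * g := by rw [hr, hv]; group
      _ = _ := by group
  rw [erv] at f2
  have l1 := len_mul_le hgen u (u⁻¹ * g)
  rw [mul_inv_cancel_left] at l1
  have l2 : len gen u ≤ 1 + len gen (gen x * u) := by
    have := len_mul_le hgen (gen x)⁻¹ (gen x * u)
    rw [inv_mul_cancel_left] at this
    have := len_le (Word.single_inv (gen := gen) (Set.mem_univ x))
    omega
  omega

lemma full_unique (H : IsReflCocycle gen N) (hgen : par gen Set.univ = ⊤)
    (hX : ∀ x ∈ X, gen x * gen x = 1) : (fullSet gen N X).Subsingleton := by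
  intro g hg g' hg'
  have h1 := H.prefix_full hgen hX hg hg'.1
  have h2 := H.prefix_full hgen hX hg' hg.1
  have : g'⁻¹ * g = 1 := eq_one_of_len hgen (by omega)
  exact (inv_mul_eq_one.1 this).symm

/-- If `N g r` is nontrivial, any word for `g` contains a letter whose associated reflection is
`r`. -/
lemma exists_split (H : IsReflCocycle gen N) (w : Word gen X n g) : ∀ r, N g r ≠ 1 →
    ∃ (p q : D) (s : V) (i j : ℕ), g = p * q ∧ i + j ≤ n ∧ Word gen X i p ∧ Word gen X j q ∧
      p * gen s * p⁻¹ = r := by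
  induction w with
  | one => intro r h; exact absurd (H.one r) h
  | @pos n g x hx w ih =>
    intro r h
    by_cases hr : r = gen x
    · exact ⟨1, gen x * g, x, 0, n + 1, by simp, by omega, .one, .pos x hx w, by simp [hr]⟩
    · rw [H.mul, H.gen, if_neg hr, one_mul] at h
      obtain ⟨p, q, s, i, j, e1, e2, e3, e4, e5⟩ :=
        ih ((gen x)⁻¹ * r * gen x) (fun h' => h (by rw [h']; group))
      refine ⟨gen x * p, q, s, i + 1, j, by rw [e1, mul_assoc], by omega, .pos x hx e3, e4, ?_⟩
      calc gen x * p * gen s * (gen x * p)⁻¹ = gen x * (p * gen s * p⁻¹) * (gen x)⁻¹ := by group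
        _ = r := by rw [e5]; group
  | @neg n g x hx w ih =>
    intro r h
    by_cases hr : r = gen x
    · exact ⟨1, (gen x)⁻¹ * g, x, 0, n + 1, by simp, by omega, .one, .neg x hx w, by simp [hr]⟩
    · rw [H.mul, H.inv, if_neg hr, one_mul] at h
      obtain ⟨p, q, s, i, j, e1, e2, e3, e4, e5⟩ :=
        ih ((gen x)⁻¹⁻¹ * r * (gen x)⁻¹) (fun h' => h (by rw [h']; group))
      refine ⟨(gen x)⁻¹ * p, q, s, i + 1, j, by rw [e1, mul_assoc], by omega, .neg x hx e3, e4,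
        ?_⟩
      calc (gen x)⁻¹ * p * gen s * ((gen x)⁻¹ * p)⁻¹
          = (gen x)⁻¹ * (p * gen s * p⁻¹) * gen x := by group
        _ = r := by rw [e5]; group

/-- If every element conjugating a generator to `y` lies in a parabolic subgroup centralizing
`y`, then any two left descents `x, y` of a common element commute. -/
lemma descents_commute (H : IsReflCocycle gen N) (hgen : par gen Set.univ = ⊤) {x y : V}
    (Z : Set V) (hZ : ∀ p s, p * gen s * p⁻¹ = gen y → p ∈ par gen Z)
    (hZc : ∀ k ∈ par gen Z, k * gen y = gen y * k)
    (hx : N g (gen x) ≠ 1) (hy : N g (gen y) ≠ 1) : gen x * gen y = gen y * gen x := by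
  by_cases hxy : gen y = gen x
  · rw [hxy]
  obtain ⟨a, e1, e2⟩ := H.deletion_len hgen g (gen x)
  set g' := gen x ^ (-a) * g with hg'
  have eg : g = gen x ^ a * g' := by rw [hg']; group
  rw [eg, H.mul, H.zpow, if_neg hxy, one_mul] at hy
  obtain ⟨p, q, s, i, j, f1, f2, f3, f4, f5⟩ := H.exists_split (word_len hgen g')
    ((gen x ^ a)⁻¹ * gen y * gen x ^ a) (fun h' => hy (by rw [h']; group))
  have hP : gen x ^ a * p ∈ par gen Z := by
    apply hZ _ s
    calc gen x ^ a * p * gen s * (gen x ^ a * p)⁻¹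
        = gen x ^ a * (p * gen s * p⁻¹) * (gen x ^ a)⁻¹ := by group
      _ = gen y := by rw [f5]; group
  -- `x` is a descent of `x ^ a * p`: otherwise deletion in `p` would shorten `g`
  have hNP : N (gen x ^ a * p) (gen x) ≠ 1 := by
    intro h
    obtain ⟨k, n', d1, d2, d3⟩ := H.deletion f3 (gen x)
    have ec : (gen x ^ a)⁻¹ * gen x * gen x ^ a = gen x := by group
    rw [H.mul, H.zpow, if_pos rfl, ec, d1] at h
    have hk : gen x ^ (-k) = gen x ^ a := by
      rw [zpow_neg, eq_comm, eq_inv_iff_mul_eq_one]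
      calc gen x ^ a * gen x ^ k = gen x ^ a * (gen x ^ a * gen x ^ k * (gen x ^ a)⁻¹) := by group
        _ = 1 := h
    rw [hk] at d3
    have l := len_le (d3.mul f4)
    rw [mul_assoc, ← f1, ← eg] at l
    have hk0 : k = 0 := by omega
    rw [hk0, neg_zero, zpow_zero] at hk
    exact hx (by rw [e1, ← hk])
  exact hZc _ (H.mem_of_ne_one hP _ hNP)

end IsReflCocycle

end Reflections

end DyerGrowth

namespace DyerGrowth

/-! ### Rational power series -/

section Rational

open PowerSeries

/-- A power series over `ℤ` that is a quotient of polynomials with denominator not vanishing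
at `0`. -/
def IsRat (s : PowerSeries ℤ) : Prop :=
  ∃ p q : Polynomial ℤ, q.coeff 0 ≠ 0 ∧ (q : PowerSeries ℤ) * s = (p : PowerSeries ℤ)

lemma IsRat.coe (p : Polynomial ℤ) : IsRat (p : PowerSeries ℤ) := ⟨p, 1, by simp, by simp⟩

lemma IsRat.add {s t : PowerSeries ℤ} (hs : IsRat s) (ht : IsRat t) : IsRat (s + t) := by
  obtain ⟨p, q, hq, h⟩ := hs
  obtain ⟨p', q', hq', h'⟩ := ht
  refine ⟨p * q' + q * p', q * q', by simp [Polynomial.mul_coeff_zero, hq, hq'], ?_⟩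
  push_cast
  rw [← h, ← h']
  ring

lemma IsRat.mul {s t : PowerSeries ℤ} (hs : IsRat s) (ht : IsRat t) : IsRat (s * t) := by
  obtain ⟨p, q, hq, h⟩ := hs
  obtain ⟨p', q', hq', h'⟩ := ht
  refine ⟨p * p', q * q', by simp [Polynomial.mul_coeff_zero, hq, hq'], ?_⟩
  push_cast
  rw [← h, ← h']
  ring

lemma IsRat.sum {ι : Type*} (F : Finset ι) (s : ι → PowerSeries ℤ) (h : ∀ i ∈ F, IsRat (s i)) :
    IsRat (∑ i ∈ F, s i) := by
  classical
  induction F using Finset.induction_on with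
  | empty => simpa using IsRat.coe 0
  | insert a F ha ih =>
    rw [Finset.sum_insert ha]
    exact (h a (by simp)).add (ih fun i hi => h i (by simp [hi]))

/-- Quotients of rational series are rational. -/
lemma IsRat.of_mul {u s v : PowerSeries ℤ} (hu : IsRat u) (hv : IsRat v)
    (hu0 : constantCoeff u ≠ 0) (h : u * s = v) : IsRat s := by
  obtain ⟨p, q, hq, e⟩ := hu
  obtain ⟨p', q', hq', e'⟩ := hv
  refine ⟨q * p', p * q', ?_, ?_⟩
  · have := congrArg constantCoeff e
    simp only [map_mul, Polynomial.constantCoeff_coe] at this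
    rw [Polynomial.mul_coeff_zero, ← this]
    exact mul_ne_zero (mul_ne_zero hq hu0) hq'
  · push_cast
    rw [← e, ← e', ← h]
    ring

end Rational

/-! ### Growth series of parabolic subgroups -/

section Growth

open PowerSeries IsReflCocycle

variable {V D : Type*} [Group D] {gen : V → D} {N : D → D → D}

/-- The growth series of a subset. -/
noncomputable abbrev gs (gen : V → D) (A : Set D) : PowerSeries ℤ :=
  growthSeries (Set.range gen) A

lemma coeff_gs_ncard (A : Set D) (n : ℕ) :
    coeff n (gs gen A) = (Set.ncard {g ∈ A | wordLength (Set.range gen) g = n} : ℤ) :=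
  coeff_mk _ _

lemma coeff_gs [Finite V] (hgen : par gen Set.univ = ⊤) (A : Set D) (n : ℕ) :
    coeff n (gs gen A) = ∑ g ∈ (finite_len hgen n).toFinset, if g ∈ A then 1 else 0 := by
  rw [coeff_gs_ncard, Finset.sum_boole, ← Set.ncard_coe_finset]
  congr 2
  ext g
  simp [and_comm]

lemma gs_singleton (a : D) : gs gen {a} = X ^ (len gen a) := by
  ext n
  rw [coeff_gs_ncard, coeff_X_pow]
  split_ifs with h
  · have : {g | g ∈ ({a} : Set D) ∧ wordLength (Set.range gen) g = n} = {a} := by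
      ext g
      simp only [Set.mem_singleton_iff, Set.mem_ofPred_eq, and_iff_left_iff_imp]
      rintro rfl; exact h.symm
    rw [this]; simp
  · have : {g | g ∈ ({a} : Set D) ∧ wordLength (Set.range gen) g = n} = ∅ := by
      ext g
      simp only [Set.mem_singleton_iff, Set.mem_ofPred_eq, Set.mem_empty_iff_false, iff_false]
      rintro ⟨rfl, e⟩; exact h e.symm
    rw [this]; simp

lemma isRat_gs_finite [Finite V] (hgen : par gen Set.univ = ⊤) {A : Set D} (hA : A.Finite) :
    IsRat (gs gen A) := by
  induction A, hA using Set.Finite.induction_on with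
  | empty =>
    have : gs gen ∅ = ((0 : Polynomial ℤ) : PowerSeries ℤ) := by
      ext n; rw [coeff_gs hgen]; simp
    rw [this]; exact .coe 0
  | @insert a A ha _ ih =>
    have : gs gen (insert a A) = ((Polynomial.X ^ (len gen a) : Polynomial ℤ) : PowerSeries ℤ)
        + gs gen A := by
      rw [Polynomial.coe_pow, Polynomial.coe_X, ← gs_singleton]
      ext n
      rw [map_add, coeff_gs hgen, coeff_gs hgen, coeff_gs hgen, ← Finset.sum_add_distrib]
      refine Finset.sum_congr rfl fun g _ => ?_
      by_cases h : g = a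
      · subst h; simp [ha]
      · simp [h]
    rw [this]
    exact (IsRat.coe _).add ih

/-- A factorization `B = P · A` that is unique and along which lengths add makes growth series
multiply. -/
lemma gs_mul [Finite V] (hgen : par gen Set.univ = ⊤) {P A B : Set D}
    (hmem : ∀ h ∈ P, ∀ a ∈ A, h * a ∈ B) (hlen : ∀ h ∈ P, ∀ a ∈ A,
      len gen (h * a) = len gen h + len gen a)
    (hsurj : ∀ b ∈ B, ∃ h ∈ P, ∃ a ∈ A, b = h * a)
    (hinj : ∀ h ∈ P, ∀ a ∈ A, ∀ h' ∈ P, ∀ a' ∈ A, h * a = h' * a' → h = h') :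
    gs gen P * gs gen A = gs gen B := by
  classical
  ext n
  rw [coeff_mul]
  simp only [coeff_gs hgen, Finset.sum_boole]
  rw [← Nat.cast_id (Finset.card _), Nat.cast_id]
  simp only [← Nat.cast_mul, ← Nat.cast_sum, ← Finset.card_product]
  rw [← Finset.card_sigma]
  congr 1
  refine Finset.card_bij (fun z _ => z.2.1 * z.2.2) ?_ ?_ ?_
  · rintro ⟨⟨i, j⟩, h, a⟩ hz
    simp only [Finset.mem_sigma, Finset.HasAntidiagonal.mem_antidiagonal, Finset.mem_product,
      Finset.mem_filter, Set.Finite.mem_toFinset, Set.mem_ofPred_eq] at hz ⊢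
    obtain ⟨hij, ⟨h1, h2⟩, h3, h4⟩ := hz
    exact ⟨by rw [hlen h h2 a h4, h1, h3, hij], hmem h h2 a h4⟩
  · rintro ⟨⟨i, j⟩, h, a⟩ hz ⟨⟨i', j'⟩, h', a'⟩ hz' e
    simp only [Finset.mem_sigma, Finset.HasAntidiagonal.mem_antidiagonal, Finset.mem_product,
      Finset.mem_filter, Set.Finite.mem_toFinset, Set.mem_ofPred_eq] at hz hz' e
    obtain ⟨hij, ⟨rfl, h2⟩, rfl, h4⟩ := hz
    obtain ⟨hij', ⟨rfl, h2'⟩, rfl, h4'⟩ := hz'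
    obtain rfl := hinj h h2 a h4 h' h2' a' h4' e
    obtain rfl := mul_left_cancel e
    rfl
  · intro b hb
    simp only [Finset.mem_filter, Set.Finite.mem_toFinset, Set.mem_ofPred_eq] at hb
    obtain ⟨hb1, hb2⟩ := hb
    obtain ⟨h, hh, a, ha, rfl⟩ := hsurj b hb2
    refine ⟨⟨(len gen h, len gen a), h, a⟩, ?_, rfl⟩
    simp only [Finset.mem_sigma, Finset.HasAntidiagonal.mem_antidiagonal, Finset.mem_product,
      Finset.mem_filter, Set.Finite.mem_toFinset, Set.mem_ofPred_eq, true_and]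
    exact ⟨by rw [← hb1, hlen h hh a ha], hh, ha⟩

lemma constantCoeff_gs (hgen : par gen Set.univ = ⊤) {A : Set D} (h1 : 1 ∈ A) :
    constantCoeff (gs gen A) = 1 := by
  rw [← coeff_zero_eq_constantCoeff_apply, coeff_gs_ncard]
  have : {g | g ∈ A ∧ wordLength (Set.range gen) g = 0} = {1} := by
    ext g
    simp only [Set.mem_ofPred_eq, Set.mem_singleton_iff]
    constructor
    · rintro ⟨-, h⟩; exact eq_one_of_len hgen h
    · rintro rfl; exact ⟨h1, len_one⟩
  rw [this]; simp

/-- Growth of a cyclic parabolic subgroup: finite, or `(1 + t) / (1 - t)`. -/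
lemma isRat_gs_cyclic [Finite V] (H : IsReflCocycle gen N) (hgen : par gen Set.univ = ⊤) (y : V) :
    IsRat (gs gen (par gen {y} : Set D)) := by
  by_cases hfin : (par gen {y} : Set D).Finite
  · exact isRat_gs_finite hgen hfin
  have hpar : par gen {y} = Subgroup.zpowers (gen y) := by
    rw [par, Set.image_singleton, Subgroup.zpowers_eq_closure]
  have hinj : Function.Injective fun k : ℤ => gen y ^ k := by
    rw [injective_zpow_iff_not_isOfFinOrder, ← finite_zpowers, ← hpar]
    exact hfin
  have hlen : ∀ k : ℤ, len gen (gen y ^ k) = k.natAbs := by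
    intro k
    refine le_antisymm (len_le (Word.zpow (X := Set.univ) (Set.mem_univ y) k)) ?_
    obtain ⟨k', h1, h2⟩ := H.deletion_len hgen (gen y ^ k) (gen y)
    rw [H.zpow, if_pos rfl] at h1
    have := hinj h1
    subst this
    omega
  have hc : gs gen (par gen {y} : Set D) = PowerSeries.mk fun n => if n = 0 then 1 else 2 := by
    ext n
    rw [coeff_gs_ncard, coeff_mk]
    have : {g | g ∈ (par gen {y} : Set D) ∧ wordLength (Set.range gen) g = n} =
        {gen y ^ (n : ℤ), gen y ^ (-n : ℤ)} := by
      ext g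
      rw [hpar]
      simp only [SetLike.mem_coe, Set.mem_ofPred_eq, Set.mem_insert_iff, Set.mem_singleton_iff,
        Subgroup.mem_zpowers_iff]
      constructor
      · rintro ⟨⟨k, rfl⟩, h⟩
        have : k.natAbs = n := (hlen k).symm.trans h
        rcases Int.natAbs_eq k with h' | h' <;> rw [this] at h' <;> rw [h'] <;> simp
      · rintro (rfl | rfl)
        · exact ⟨⟨_, rfl⟩, (hlen _).trans (by simp)⟩
        · exact ⟨⟨_, rfl⟩, (hlen _).trans (by simp)⟩
    rw [this]
    split_ifs with hn
    · subst hn; simp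
    · rw [Set.ncard_pair]
      · rfl
      · intro e
        have := hinj e
        omega
  refine ⟨1 + Polynomial.X, 1 - Polynomial.X, by simp, ?_⟩
  rw [hc]
  push_cast
  ext n
  rw [sub_mul, one_mul, map_sub]
  rcases n with _ | n
  · simp
  · rw [coeff_succ_X_mul, coeff_mk, coeff_mk]
    rcases n with _ | n
    · simp [coeff_one]
    · simp [coeff_one, coeff_X]

/-- Inclusion–exclusion over descent sets: an element of the parabolic subgroup on `X` is counted
on the left with the sum of `(-1)^|Y|` over the sets `Y` of its non-descents. -/
lemma incl_excl [Finite V] (hgen : par gen Set.univ = ⊤) (X : Finset V) :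
    ∑ Y ∈ X.powerset, (-1 : PowerSeries ℤ) ^ Y.card *
      gs gen ((par gen X : Set D) ∩ minSet gen N Y) = gs gen (fullSet gen N X) := by
  classical
  ext n
  rw [map_sum]
  have e : ∀ Y ∈ X.powerset, coeff n ((-1 : PowerSeries ℤ) ^ Y.card *
      gs gen ((par gen X : Set D) ∩ minSet gen N Y)) =
      ∑ g ∈ (finite_len hgen n).toFinset, if g ∈ par gen (X : Set V) then
        (if Y ⊆ X.filter (fun x => N g (gen x) = 1) then (-1 : ℤ) ^ Y.card else 0) else 0 := by
    intro Y hY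
    have hc : ((-1 : PowerSeries ℤ) ^ Y.card) = C ((-1 : ℤ) ^ Y.card) := by simp
    rw [hc, coeff_C_mul, coeff_gs hgen, Finset.mul_sum]
    refine Finset.sum_congr rfl fun g _ => ?_
    have : Y ⊆ X.filter (fun x => N g (gen x) = 1) ↔ g ∈ minSet gen N (Y : Set V) := by
      constructor
      · intro h x hx
        exact (Finset.mem_filter.1 (h hx)).2
      · intro h x hx
        exact Finset.mem_filter.2 ⟨Finset.mem_powerset.1 hY hx, h x hx⟩
    simp only [this, Set.mem_inter_iff, SetLike.mem_coe]
    split_ifs <;> simp_all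
  rw [Finset.sum_congr rfl e, Finset.sum_comm, coeff_gs hgen]
  refine Finset.sum_congr rfl fun g _ => ?_
  by_cases hg : g ∈ par gen (X : Set V)
  · simp only [if_pos hg]
    rw [← Finset.sum_filter]
    have : X.powerset.filter (fun Y => Y ⊆ X.filter (fun x => N g (gen x) = 1)) =
        (X.filter (fun x => N g (gen x) = 1)).powerset := by
      ext Y
      simp only [Finset.mem_filter, Finset.mem_powerset, and_iff_right_iff_imp]
      exact fun h => h.trans (Finset.filter_subset _ _)
    rw [this, Finset.sum_powerset_neg_one_pow_card]
    congr 1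
    rw [Finset.filter_eq_empty_iff]
    simp only [fullSet, Set.mem_ofPred_eq, hg, true_and, Finset.mem_coe]
  · have : g ∉ fullSet gen N (X : Set V) := fun h => hg h.1
    simp [hg, this]

/-- A letter `y` commuting with all of `X` and not generated by the other letters of `X` splits
off a cyclic factor along which lengths add. -/
lemma gs_central [Finite V] [DecidableEq V] (H : IsReflCocycle gen N)
    (hgen : par gen Set.univ = ⊤) {X : Finset V} {y : V} (hy : y ∈ X)
    (hc : ∀ x ∈ X, gen x * gen y = gen y * gen x)
    (hn : gen y ∉ par gen (X.erase y : Set V)) :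
    gs gen (par gen {y} : Set D) * gs gen (par gen (X.erase y : Set V) : Set D) =
      gs gen (par gen X : Set D) := by
  have hpar : par gen {y} = Subgroup.zpowers (gen y) := by
    rw [par, Set.image_singleton, Subgroup.zpowers_eq_closure]
  have hmin : ∀ a ∈ par gen (X.erase y : Set V), ∀ r ∈ par gen {y}, N a r = 1 := by
    intro a ha
    rw [← H.minSet_iff hgen]
    rintro _ rfl
    by_contra h
    exact hn (H.mem_of_ne_one ha _ h)
  refine gs_mul hgen ?_ (fun h hh a ha => H.len_coset hgen (hmin a ha) hh) ?_
    (fun h hh a ha h' hh' a' ha' e => H.coset_unique hh hh' (hmin a ha) (hmin a' ha') e)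
  · intro h hh a ha
    refine mul_mem (Subgroup.closure_mono (Set.image_mono ?_) hh)
      (Subgroup.closure_mono (Set.image_mono ?_) ha)
    · simpa using hy
    · simp
  · intro b hb
    obtain ⟨n, w⟩ := exists_word (g := b) hb
    clear hb
    have hcz : ∀ x ∈ X, ∀ k : ℤ, Commute (gen x) (gen y ^ k) := fun x hx k =>
      Commute.zpow_right (hc x hx) k
    induction w with
    | one => exact ⟨1, one_mem _, 1, one_mem _, by simp⟩
    | pos x hx w ih =>
      obtain ⟨h, hh, a, ha, rfl⟩ := ih
      by_cases hxy : x = y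
      · subst hxy
        exact ⟨gen x * h, mul_mem (gen_mem_par rfl) hh, a, ha, by rw [mul_assoc]⟩
      · refine ⟨h, hh, gen x * a, mul_mem (gen_mem_par (by simpa [hxy] using hx)) ha, ?_⟩
        rw [hpar] at hh
        obtain ⟨k, rfl⟩ := hh
        rw [← mul_assoc, ← mul_assoc]
        exact congrArg (· * a) (hcz x hx k)
    | neg x hx w ih =>
      obtain ⟨h, hh, a, ha, rfl⟩ := ih
      by_cases hxy : x = y
      · subst hxy
        exact ⟨(gen x)⁻¹ * h, mul_mem (inv_mem (gen_mem_par rfl)) hh, a, ha, by rw [mul_assoc]⟩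
      · refine ⟨h, hh, (gen x)⁻¹ * a,
          mul_mem (inv_mem (gen_mem_par (by simpa [hxy] using hx))) ha, ?_⟩
        rw [hpar] at hh
        obtain ⟨k, rfl⟩ := hh
        rw [← mul_assoc, ← mul_assoc]
        exact congrArg (· * a) (hcz x hx k).inv_left

/-- Growth series multiply along the decomposition of a parabolic subgroup into right cosets of a
smaller one. -/
lemma gs_parabolic_mul [Finite V] (H : IsReflCocycle gen N) (hgen : par gen Set.univ = ⊤)
    {X Y : Set V} (hYX : Y ⊆ X) :
    gs gen (par gen Y : Set D) * gs gen ((par gen X : Set D) ∩ minSet gen N Y) =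
      gs gen (par gen X : Set D) := by
  have hle : par gen Y ≤ par gen X := Subgroup.closure_mono (Set.image_mono hYX)
  have hm : ∀ a, a ∈ (par gen X : Set D) ∩ minSet gen N Y → ∀ r ∈ par gen Y, N a r = 1 :=
    fun a ha => (H.minSet_iff hgen).1 ha.2
  refine gs_mul hgen (fun h hh a ha => mul_mem (hle hh) ha.1)
    (fun h hh a ha => H.len_coset hgen (hm a ha) hh) ?_
    (fun h hh a ha h' hh' a' ha' e => H.coset_unique hh hh' (hm a ha) (hm a' ha') e)
  intro b hb
  obtain ⟨h, hh, a, rfl, ha⟩ := H.exists_coset_rep hgen Y b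
  exact ⟨h, hh, a, ⟨(Subgroup.mul_mem_cancel_left _ (hle hh)).1 hb,
    (H.minSet_iff hgen).2 ha⟩, rfl⟩

/-- Solving the inclusion–exclusion identity for the growth series of the parabolic subgroup on
`X`, given those of its proper parabolic subgroups. -/
lemma isRat_of_full [Finite V] (H : IsReflCocycle gen N) (hgen : par gen Set.univ = ⊤)
    {X : Finset V} (hX : X.Nonempty) (ih : ∀ Y : Finset V, Y ⊂ X → IsRat (gs gen (par gen Y : Set D)))
    (hfull : IsRat (gs gen (fullSet gen N X))) : IsRat (gs gen (par gen X : Set D)) := by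
  classical
  have h0 : ∀ Y : Finset V, constantCoeff (gs gen (par gen Y : Set D)) = 1 :=
    fun Y => constantCoeff_gs hgen (one_mem _)
  let inv : Finset V → PowerSeries ℤ := fun Y => invOfUnit (gs gen (par gen Y : Set D)) 1
  have hinv : ∀ Y : Finset V, gs gen (par gen Y : Set D) * inv Y = 1 :=
    fun Y => mul_invOfUnit _ _ (by rw [h0]; simp)
  have hinv0 : ∀ Y : Finset V, constantCoeff (inv Y) = 1 := by
    intro Y
    have := congrArg constantCoeff (hinv Y)
    rwa [map_mul, h0, one_mul, map_one] at this
  have hmin : ∀ Y : Finset V, Y ⊆ X → gs gen ((par gen X : Set D) ∩ minSet gen N Y) =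
      inv Y * gs gen (par gen X : Set D) := by
    intro Y hY
    rw [← gs_parabolic_mul H hgen (X := X) (Y := Y) (by exact_mod_cast hY), ← mul_assoc,
      mul_comm (inv Y), hinv, one_mul]
  have hie := incl_excl (N := N) hgen X
  have hpow : X.powerset = insert X X.ssubsets := by
    rw [Finset.ssubsets, Finset.insert_erase (Finset.mem_powerset_self X)]
  have hnot : X ∉ X.ssubsets := by simp
  rw [hpow, Finset.sum_insert hnot, hmin X subset_rfl, mul_comm (inv X), hinv, mul_one] at hie
  refine IsRat.of_mul (u := ∑ Y ∈ X.ssubsets, (-1 : PowerSeries ℤ) ^ Y.card * inv Y)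
    (v := gs gen (fullSet gen N X) + -(-1 : PowerSeries ℤ) ^ X.card) ?_ ?_ ?_ ?_
  · refine IsRat.sum _ _ fun Y hY => IsRat.mul ?_ ?_
    · simpa using IsRat.coe ((-1) ^ Y.card)
    · exact (ih Y (Finset.mem_ssubsets.1 hY)).of_mul (v := 1) (by simpa using IsRat.coe 1)
        (by rw [h0]; exact one_ne_zero) (hinv Y)
  · exact hfull.add (by simpa using IsRat.coe (-(-1) ^ X.card))
  · have h := Finset.sum_powerset_neg_one_pow_card_of_nonempty hX
    rw [hpow, Finset.sum_insert hnot] at h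
    simp only [map_sum, map_mul, map_pow, map_neg, map_one, hinv0, mul_one]
    intro h'
    rw [h', add_zero] at h
    exact pow_ne_zero _ (by norm_num) h
  · rw [← hie, Finset.sum_mul]
    simp only [mul_assoc]
    rw [add_comm, ← add_assoc, neg_add_cancel, zero_add]
    exact Finset.sum_congr rfl fun Y hY => by
      rw [hmin Y (Finset.mem_ssubsets.1 hY).subset]

/-- Rationality for all parabolic subgroups, by induction on `X`. The hypothesis `hV` says that a
letter which is not an involution commutes with every letter sharing a descent set with it. -/
theorem isRat_parabolic [Finite V] (H : IsReflCocycle gen N) (hgen : par gen Set.univ = ⊤)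
    (hV : ∀ y, gen y * gen y = 1 ∨ ∀ x g, N g (gen x) ≠ 1 → N g (gen y) ≠ 1 →
      gen x * gen y = gen y * gen x) (X : Finset V) :
    IsRat (gs gen (par gen X : Set D)) := by
  classical
  induction X using Finset.strongInduction with
  | _ X ih =>
  rcases X.eq_empty_or_nonempty with rfl | hne
  · refine isRat_gs_finite hgen ?_
    simp [par]
  by_cases hinv : ∀ x ∈ X, gen x * gen x = 1
  · exact isRat_of_full H hgen hne ih
      (isRat_gs_finite hgen (H.full_unique hgen (by exact_mod_cast hinv)).finite)
  push Not at hinv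
  obtain ⟨y, hy, hy2⟩ := hinv
  have hVy := (hV y).resolve_left hy2
  by_cases hc : ∀ x ∈ X, gen x * gen y = gen y * gen x
  · have hrat := ih _ (Finset.erase_ssubset hy)
    by_cases hn : gen y ∈ par gen (X.erase y : Set V)
    · have : par gen (X : Set V) = par gen (X.erase y : Set V) := by
        refine le_antisymm ?_ (Subgroup.closure_mono (Set.image_mono (by simp)))
        rw [Subgroup.closure_le]
        rintro _ ⟨x, hx, rfl⟩
        by_cases hxy : x = y
        · rw [hxy]; exact hn
        · exact gen_mem_par (by simpa [hxy] using hx)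
      rw [this]
      exact hrat
    · rw [← gs_central H hgen hy hc hn]
      exact (isRat_gs_cyclic H hgen y).mul hrat
  · push Not at hc
    obtain ⟨x, hx, hxy⟩ := hc
    refine isRat_of_full H hgen hne ih (isRat_gs_finite hgen (Set.Finite.subset Set.finite_empty ?_))
    intro g hg
    exact hxy (hVy x g (hg.2 x hx) (hg.2 y hy))

end Growth

end DyerGrowth

/-- The growth series of a Dyer system is a rational function. -/
theorem growthSeries_rational {V : Type} [Fintype V] (Γ : DyerGraph V) :
    ∃ p q : Polynomial ℤ, q.coeff 0 ≠ 0 ∧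
      (q : PowerSeries ℤ) * growthSeries (Set.range Γ.gen) (Set.univ : Set Γ.DyerGroup) =
        (p : PowerSeries ℤ) := by
  obtain ⟨N, h1, h2⟩ := Γ.exists_reflCocycle
  have H : DyerGrowth.IsReflCocycle Γ.gen N := ⟨h1, h2⟩
  have hgen : DyerGrowth.par Γ.gen Set.univ = ⊤ := by
    rw [DyerGrowth.par, Set.image_univ]
    exact PresentedGroup.closure_range_of Γ.rels
  have hV : ∀ y, Γ.gen y * Γ.gen y = 1 ∨ ∀ x g, N g (Γ.gen x) ≠ 1 → N g (Γ.gen y) ≠ 1 →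
      Γ.gen x * Γ.gen y = Γ.gen y * Γ.gen x := by
    intro y
    by_cases hy : Γ.f y = 2
    · exact Or.inl (Γ.gen_sq y hy)
    · refine Or.inr fun x g hx hy' =>
        H.descents_commute hgen (insert y {u | Γ.Adj y u}) (Γ.mem_star_of_conj y hy) ?_ hx hy'
      intro k hk
      have hle : DyerGrowth.par Γ.gen (insert y {u | Γ.Adj y u}) ≤
          Subgroup.centralizer {Γ.gen y} := by
        rw [Subgroup.closure_le]
        rintro _ ⟨u, rfl | hu, rfl⟩
        · simp [Subgroup.mem_centralizer_singleton_iff]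
        · rw [SetLike.mem_coe, Subgroup.mem_centralizer_singleton_iff]
          refine (Γ.gen_comm y u hu ?_).symm
          by_contra hm
          exact hy (Γ.compat hu hm).1
      exact Subgroup.mem_centralizer_singleton_iff.1 (hle hk)
  have h := DyerGrowth.isRat_parabolic H hgen hV Finset.univ
  rwa [Finset.coe_univ, hgen, Subgroup.coe_top] at h
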